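/- Let q ∈ 𝕊 with re(q) = q₀, and suppose P ∈ 𝕊[x] is written as P(x) = Q(x) Ψ_q(x) + B x + A with Q ∈ 𝕊[x] and A, B = b₀ + b₁ i + b₂ j + b₃ k ∈ 𝕊, where B ≠ 0 and det(B) = 0. Suppose there is γ₀ ∈ ℝ with A + B γ₀ = 0 and that (q₀ − γ₀)² = −dv(q). Set k₁ = −(b₀b₂ + b₁b₃)/(b₀² + b₁²), k₂ = (b₁b₂ − b₀b₃)/(b₀² + b₁²). Then the set of zeros of P quasi-similar to q (re(z) = q₀ and det(z) = det(q)) is exactly the line ℒ = { q₀ + β i + (k₂β + k₁(q₀ − γ₀)) j + (−k₁β + k₂(q₀ − γ₀)) k : β ∈ ℝ }. -/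

import Mathlib

open Quaternion Polynomial

noncomputable section

/-- The real algebra of coquaternions (split quaternions):
basis `1, i, j, k` with `i² = -1`, `j² = k² = 1`, `ij = -ji = k`. -/
abbrev CoQ : Type := ℍ[ℝ, -1, 1]

/-- The determinant of a coquaternion: `det q = q₀² + q₁² - q₂² - q₃²` (equals `q * star q`). -/
def coDet (q : CoQ) : ℝ := q.re ^ 2 + q.imI ^ 2 - q.imJ ^ 2 - q.imK ^ 2

/-- The determinant of the vector part of a coquaternion: `dv q = q₁² - q₂² - q₃²`. -/
def coDv (q : CoQ) : ℝ := q.imI ^ 2 - q.imJ ^ 2 - q.imK ^ 2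

/-- The characteristic polynomial of the quasi-similarity class of `q`:
`Ψ_q(x) = x² - 2 re(q) x + det(q)`, a polynomial with real coefficients. -/
def charPoly (q : CoQ) : Polynomial CoQ :=
  X ^ 2 - C ((2 * q.re : ℝ) : CoQ) * X + C ((coDet q : ℝ) : CoQ)

/-!
On the quasi-similarity class of `q` the real polynomial `Ψ_q` vanishes, and since its coefficients
are central, `P` takes the value `B z + A = B (z - γ₀)` there. Writing `B = u + v j` with `u`, `v`
in `ℝ + ℝ i`, singularity of `B` means `|u| = |v|`, so that `B = u (1 - κ)` with `u` invertible and
`κ = -u⁻¹ v j = k₁ j + k₂ k`, `κ² = 1`. Hence `B w = 0` if and only if `κ w = w`, which expresses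
the `j` and `k` coordinates of `w = z - γ₀` through the other two. Conversely, such a `w` is a right
zero divisor, so `det (z - γ₀) = 0 = det (q - γ₀)`, and `re z = re q` then forces `det z = det q`.
-/

theorem eval_mul_map_algebraMap {R S : Type*} [CommSemiring R] [Semiring S] [Algebra R S]
    (p : S[X]) (r : R[X]) (x : S) :
    (p * r.map (algebraMap R S)).eval x = p.eval x * aeval x r := by
  rw [← eval_map_algebraMap]
  refine eval₂_mul_noncomm (RingHom.id S) x fun n => ?_
  rw [coeff_map]
  exact Algebra.commute_algebraMap_left _ x

theorem mk_zero_zero_mul_eq_self_iff {R : Type*} [CommRing R] {s t : R} (hst : s ^ 2 + t ^ 2 = 1)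
    (w : ℍ[R,-1,1]) :
    (⟨0, 0, s, t⟩ : ℍ[R,-1,1]) * w = w ↔
      w.imJ = t * w.imI + s * w.re ∧ w.imK = -s * w.imI + t * w.re := by
  simp only [QuaternionAlgebra.ext_iff, QuaternionAlgebra.re_mul, QuaternionAlgebra.imI_mul,
    QuaternionAlgebra.imJ_mul, QuaternionAlgebra.imK_mul]
  constructor
  · rintro ⟨-, -, hJ, hK⟩
    constructor
    · linear_combination -hJ
    · linear_combination -hK
  · rintro ⟨hJ, hK⟩
    rw [hJ, hK]
    refine ⟨?_, ?_, by ring, by ring⟩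
    · linear_combination w.re * hst
    · linear_combination w.imI * hst

namespace CoQ

theorem self_mul_star (z : CoQ) : z * star z = (coDet z : CoQ) := by
  rw [QuaternionAlgebra.mul_star_eq_coe, QuaternionAlgebra.coe_inj, coDet]
  simp only [QuaternionAlgebra.re_mul, QuaternionAlgebra.re_star, QuaternionAlgebra.imI_star,
    QuaternionAlgebra.imJ_star, QuaternionAlgebra.imK_star]
  ring

theorem star_mul_self (z : CoQ) : star z * z = (coDet z : CoQ) := by
  rw [star_comm_self', self_mul_star]

theorem isUnit_of_coDet_ne_zero {z : CoQ} (hz : coDet z ≠ 0) : IsUnit z := by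
  have smul_coDet : (coDet z)⁻¹ • (coDet z : CoQ) = 1 := by
    rw [QuaternionAlgebra.smul_coe, inv_mul_cancel₀ hz, QuaternionAlgebra.coe_one]
  refine isUnit_iff_exists.2 ⟨(coDet z)⁻¹ • star z, ?_, ?_⟩
  · rw [mul_smul_comm, self_mul_star, smul_coDet]
  · rw [smul_mul_assoc, star_mul_self, smul_coDet]

theorem coDet_eq_zero_of_mul_eq_zero {b w : CoQ} (hb : b ≠ 0) (hbw : b * w = 0) :
    coDet w = 0 := by
  by_contra hw
  exact hb ((isUnit_of_coDet_ne_zero hw).mul_left_eq_zero.1 hbw)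

theorem coDet_eq_re_sq_add_coDv (z : CoQ) : coDet z = z.re ^ 2 + coDv z := by
  rw [coDet, coDv]
  ring

theorem coDet_sub_coe (z : CoQ) (r : ℝ) : coDet (z - (r : CoQ)) = (z.re - r) ^ 2 + coDv z := by
  simp [coDet_eq_re_sq_add_coDv, coDv]

/-- Quasi-similarity of coquaternions: equality of real parts and of determinants. It is coarser
than similarity, since a real number is quasi-similar to non-real coquaternions. -/
def QuasiSimilar (z q : CoQ) : Prop :=
  z.re = q.re ∧ coDet z = coDet q

theorem QuasiSimilar.charPoly_eq {z q : CoQ} (h : QuasiSimilar z q) : charPoly z = charPoly q := by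
  rw [charPoly, charPoly, h.1, h.2]

theorem quasiSimilar_of_coDet_sub_coe_eq {z q : CoQ} {r : ℝ} (hre : z.re = q.re)
    (hdet : coDet (z - (r : CoQ)) = coDet (q - (r : CoQ))) : QuasiSimilar z q := by
  have hdv : coDv z = coDv q := by
    rwa [coDet_sub_coe, coDet_sub_coe, hre, add_right_inj] at hdet
  exact ⟨hre, by rw [coDet_eq_re_sq_add_coDv, coDet_eq_re_sq_add_coDv, hre, hdv]⟩

theorem charPoly_eq_map (q : CoQ) :
    charPoly q = (X ^ 2 - C (2 * q.re) * X + C (coDet q) : ℝ[X]).map (algebraMap ℝ CoQ) := by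
  simp only [charPoly, Polynomial.map_add, Polynomial.map_sub, Polynomial.map_mul,
    Polynomial.map_pow, map_X, map_C, QuaternionAlgebra.coe_algebraMap]

theorem eval_mul_charPoly (p : CoQ[X]) (q z : CoQ) :
    (p * charPoly q).eval z = p.eval z * (charPoly q).eval z := by
  rw [charPoly_eq_map, eval_mul_map_algebraMap, eval_map_algebraMap]

theorem eval_charPoly_self (z : CoQ) : (charPoly z).eval z = 0 := by
  have trace : ((2 * z.re : ℝ) : CoQ) = z + star z := by
    rw [QuaternionAlgebra.self_add_star', zero_mul, add_zero]
  rw [charPoly, eval_add, eval_sub, pow_two, eval_mul_X, eval_C_mul, eval_C, eval_X, trace,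
    ← star_mul_self]
  noncomm_ring

theorem QuasiSimilar.eval_mul_charPoly_add {z q : CoQ} (h : QuasiSimilar z q) (p : CoQ[X])
    (a b : CoQ) : (p * charPoly q + C b * X + C a).eval z = b * z + a := by
  rw [eval_add, eval_add, eval_mul_charPoly, ← h.charPoly_eq, eval_charPoly_self, mul_zero,
    zero_add, eval_C_mul, eval_X, eval_C]

/-- The part `u = b₀ + b₁ i` of `b = u + v j`, where `u` and `v` lie in `ℝ + ℝ i`. -/
def complexPart (b : CoQ) : CoQ :=
  ⟨b.re, b.imI, 0, 0⟩

/-- The element `κ = -u⁻¹ v j` for `b = u + v j`, which gives `b = u (1 - κ)` when `u ≠ 0`. Its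
`j` and `k` coordinates are the constants `k₁` and `k₂` of the paper. For nonzero singular `b` it
squares to `1`, and the right annihilator of `b` is the fixed space of left multiplication by it. -/
def annihilatorInvolution (b : CoQ) : CoQ :=
  ⟨0, 0, -((b.re * b.imJ + b.imI * b.imK) / (b.re ^ 2 + b.imI ^ 2)),
    (b.imI * b.imJ - b.re * b.imK) / (b.re ^ 2 + b.imI ^ 2)⟩

theorem coDet_complexPart (b : CoQ) : coDet (complexPart b) = b.re ^ 2 + b.imI ^ 2 := by
  simp [coDet, complexPart]

theorem coDet_complexPart_ne_zero {b : CoQ} (hb : b ≠ 0) (hdet : coDet b = 0) :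
    coDet (complexPart b) ≠ 0 := by
  rw [coDet_complexPart]
  intro hu
  have hv : b.imJ ^ 2 + b.imK ^ 2 = 0 := by
    rw [coDet] at hdet
    linarith
  obtain ⟨hre, hI⟩ : b.re = 0 ∧ b.imI = 0 := by
    simpa [add_eq_zero_iff_of_nonneg, sq_nonneg] using hu
  obtain ⟨hJ, hK⟩ : b.imJ = 0 ∧ b.imK = 0 := by
    simpa [add_eq_zero_iff_of_nonneg, sq_nonneg] using hv
  exact hb (QuaternionAlgebra.ext hre hI hJ hK)

theorem complexPart_mul_one_sub_annihilatorInvolution {b : CoQ} (hu : coDet (complexPart b) ≠ 0) :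
    complexPart b * (1 - annihilatorInvolution b) = b := by
  rw [coDet_complexPart] at hu
  ext <;> simp [complexPart, annihilatorInvolution] <;> field_simp <;> ring

theorem annihilatorInvolution_imJ_sq_add_imK_sq {b : CoQ} (hu : coDet (complexPart b) ≠ 0)
    (hdet : coDet b = 0) :
    (annihilatorInvolution b).imJ ^ 2 + (annihilatorInvolution b).imK ^ 2 = 1 := by
  rw [coDet_complexPart] at hu
  rw [coDet] at hdet
  simp only [annihilatorInvolution]
  field_simp
  linear_combination (-(b.re ^ 2 + b.imI ^ 2)) * hdet

theorem mul_eq_zero_iff_annihilatorInvolution_mul_eq_self {b : CoQ}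
    (hu : coDet (complexPart b) ≠ 0) (w : CoQ) :
    b * w = 0 ↔ annihilatorInvolution b * w = w := by
  conv_lhs => rw [← complexPart_mul_one_sub_annihilatorInvolution hu, mul_assoc]
  rw [(isUnit_of_coDet_ne_zero hu).mul_right_eq_zero, sub_mul, one_mul, sub_eq_zero, eq_comm]

theorem mul_eq_zero_iff_of_coDet_eq_zero {b : CoQ} (hb : b ≠ 0) (hdet : coDet b = 0) (w : CoQ) :
    b * w = 0 ↔
      w.imJ = (annihilatorInvolution b).imK * w.imI + (annihilatorInvolution b).imJ * w.re ∧
      w.imK = -(annihilatorInvolution b).imJ * w.imI + (annihilatorInvolution b).imK * w.re := by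
  have hu := coDet_complexPart_ne_zero hb hdet
  rw [mul_eq_zero_iff_annihilatorInvolution_mul_eq_self hu]
  exact mk_zero_zero_mul_eq_self_iff (annihilatorInvolution_imJ_sq_add_imK_sq hu hdet) w

theorem re_eq_and_mul_sub_coe_eq_zero_iff {b : CoQ} (hb : b ≠ 0) (hdet : coDet b = 0) (x r : ℝ)
    (z : CoQ) :
    z.re = x ∧ b * (z - (r : CoQ)) = 0 ↔ ∃ β : ℝ,
      z = (⟨x, β, (annihilatorInvolution b).imK * β + (annihilatorInvolution b).imJ * (x - r),
        -(annihilatorInvolution b).imJ * β + (annihilatorInvolution b).imK * (x - r)⟩ : CoQ) := by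
  rw [mul_eq_zero_iff_of_coDet_eq_zero hb hdet]
  simp only [QuaternionAlgebra.re_sub, QuaternionAlgebra.imI_sub, QuaternionAlgebra.imJ_sub,
    QuaternionAlgebra.imK_sub, QuaternionAlgebra.re_coe, QuaternionAlgebra.imI_coe,
    QuaternionAlgebra.imJ_coe, QuaternionAlgebra.imK_coe, sub_zero]
  constructor
  · rintro ⟨rfl, hJ, hK⟩
    exact ⟨z.imI, QuaternionAlgebra.ext rfl rfl hJ hK⟩
  · rintro ⟨β, rfl⟩
    exact ⟨rfl, rfl, rfl⟩

end CoQ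

open CoQ

/-- Case 3(b)(i) (linear zero): if `P = Q Ψ_q + B x + A` with `B ≠ 0` singular,
`A + B γ₀ = 0` for a real `γ₀`, and `(q₀ - γ₀)² = -dv q`, then the zeros of `P`
quasi-similar to `q` form exactly the line ℒ. -/
theorem stmt_17 (P Q : Polynomial CoQ) (q A B : CoQ)
    (hP : P = Q * charPoly q + C B * X + C A)
    (hB0 : B ≠ 0) (hBdet : coDet B = 0)
    (γ₀ : ℝ) (hγ : A + B * ((γ₀ : ℝ) : CoQ) = 0)
    (hcond : (q.re - γ₀) ^ 2 = -coDv q)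
    (k₁ k₂ : ℝ)
    (hk₁ : k₁ = -((B.re * B.imJ + B.imI * B.imK) / (B.re ^ 2 + B.imI ^ 2)))
    (hk₂ : k₂ = (B.imI * B.imJ - B.re * B.imK) / (B.re ^ 2 + B.imI ^ 2)) :
    {z : CoQ | z.re = q.re ∧ coDet z = coDet q ∧ P.eval z = 0} =
      {z : CoQ | ∃ β : ℝ,
        z = (⟨q.re, β, k₂ * β + k₁ * (q.re - γ₀), -k₁ * β + k₂ * (q.re - γ₀)⟩ : CoQ)} := by
  obtain rfl : k₁ = (annihilatorInvolution B).imJ := hk₁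
  obtain rfl : k₂ = (annihilatorInvolution B).imK := hk₂
  have eval_eq {z : CoQ} (hz : QuasiSimilar z q) : P.eval z = B * (z - (γ₀ : CoQ)) := by
    rw [hP, hz.eval_mul_charPoly_add, eq_neg_of_add_eq_zero_left hγ, mul_sub, sub_eq_add_neg]
  have hq : coDet (q - (γ₀ : CoQ)) = 0 := by
    rw [coDet_sub_coe, hcond, neg_add_cancel]
  have quasiSimilar {z : CoQ} (hre : z.re = q.re) (hz : B * (z - (γ₀ : CoQ)) = 0) :
      QuasiSimilar z q :=
    quasiSimilar_of_coDet_sub_coe_eq hre ((coDet_eq_zero_of_mul_eq_zero hB0 hz).trans hq.symm)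
  ext z
  refine Iff.trans ?_ (re_eq_and_mul_sub_coe_eq_zero_iff hB0 hBdet q.re γ₀ z)
  constructor
  · rintro ⟨hre, hdet, hz⟩
    exact ⟨hre, (eval_eq ⟨hre, hdet⟩).symm.trans hz⟩
  · rintro ⟨hre, hz⟩
    have hzq := quasiSimilar hre hz
    exact ⟨hre, hzq.2, (eval_eq hzq).trans hz⟩
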